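/- arXiv:1605.06818 — 4 statements merged into one kernel-verified Lean document; each statement's English description precedes it below -/
import Mathlib

section
/- Let α > 0, σ > 0, and let h : [0,∞) → [0,∞) be a differentiable, strictly increasing function with h(0) = 0 and h(x) → ∞ as x → ∞, and let f(x) = h'(x) · h(x)^(α−1) · e^(−h(x)) / Γ(α) for x > 0. Let X have density f, and set Υ = h(X) e^(σ h(X)). Then for every x > 0, the cumulative distribution function of Υ satisfies F_Υ(x) = P{Υ < x} = F_X( h⁻( w/σ ) ), where w is the unique nonnegative real number with w e^w = σ x (the principal branch of the Lambert W function evaluated at σx), h⁻(y) = inf{ t ≥ 0 : h(t) ≥ y } is the generalized inverse of h, and F_X is the cumulative distribution function of X. -/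
open MeasureTheory Real Set

/-- For `X ~ GE(α, h)` and `Υ = h(X) exp(σ h(X))` with `σ > 0`, the CDF of `Υ`
satisfies `F_Υ(x) = F_X(h⁻(W_P(σx)/σ))` for every `x > 0`, where `W_P` is the principal
branch of the Lambert W function (the unique `w ≥ 0` with `w e^w = σx`) and
`h⁻(y) = inf {t ≥ 0 : h(t) ≥ y}` is the generalized inverse of `h`. -/
theorem GE_transformed_cdf (α σ : ℝ) (hα : 0 < α) (hσ : 0 < σ) (h h' : ℝ → ℝ)
    (hderiv : ∀ x ∈ Ici (0 : ℝ), HasDerivAt h (h' x) x)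
    (hmono : StrictMonoOn h (Ici 0))
    (h0 : h 0 = 0)
    (htop : Filter.Tendsto h Filter.atTop Filter.atTop)
    (f : ℝ → ℝ)
    (hf : ∀ x, 0 < x → f x = h' x * (h x) ^ (α - 1) * Real.exp (-(h x)) / Real.Gamma α)
    (μ : Measure ℝ)
    (hμ : μ = (volume.restrict (Ioi 0)).withDensity (fun x => ENNReal.ofReal (f x))) :
    ∀ x : ℝ, 0 < x → ∀ w : ℝ, 0 ≤ w → w * Real.exp w = σ * x →
      μ {t : ℝ | h t * Real.exp (σ * h t) < x} =
        μ (Iio (sInf {t : ℝ | 0 ≤ t ∧ w / σ ≤ h t})) := by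
  intro x hx w hw hwx
  have hcont : ContinuousOn h (Ici 0) := fun t ht => (hderiv t ht).continuousAt.continuousWithinAt
  have hy : 0 ≤ w / σ := div_nonneg hw hσ.le
  obtain ⟨t0, ht0, hht0⟩ : ∃ t0 : ℝ, 0 ≤ t0 ∧ h t0 = w / σ := by
    obtain ⟨b, hb, hb0⟩ := ((htop.eventually_ge_atTop (w / σ)).and
      (Filter.eventually_ge_atTop (0 : ℝ))).exists
    obtain ⟨t0, ht0, he⟩ := intermediate_value_Icc hb0
      (hcont.mono (fun t ht => ht.1)) (show w / σ ∈ Icc (h 0) (h b) from ⟨by rw [h0]; exact hy, hb⟩)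
    exact ⟨t0, ht0.1, he⟩
  have hset : {t : ℝ | 0 ≤ t ∧ w / σ ≤ h t} = Ici t0 := by
    ext t
    simp only [mem_setOf_eq, mem_Ici]
    constructor
    · rintro ⟨h1, h2⟩
      rw [← hht0] at h2
      exact (hmono.le_iff_le ht0 h1).1 h2
    · intro h1
      have h2 : 0 ≤ t := ht0.trans h1
      refine ⟨h2, ?_⟩
      rw [← hht0]
      exact (hmono.le_iff_le ht0 h2).2 h1
  rw [hset, csInf_Ici]
  have hae : ∀ᵐ t ∂μ, t ∈ Ioi (0 : ℝ) := by
    rw [hμ]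
    exact (withDensity_absolutelyContinuous _ _).ae_le (ae_restrict_mem measurableSet_Ioi)
  have hg : StrictMonoOn (fun u : ℝ => u * Real.exp u) (Ici 0) := by
    intro a ha b hb hab
    have ha' : (0 : ℝ) ≤ a := ha
    have h1 : Real.exp a < Real.exp b := Real.exp_lt_exp.2 hab
    have h2 := Real.exp_pos b
    show a * Real.exp a < b * Real.exp b
    nlinarith
  apply measure_congr
  filter_upwards [hae] with t ht
  have ht' : (0 : ℝ) ≤ t := le_of_lt ht
  have hht : 0 ≤ h t := by
    rw [← h0]
    exact (hmono.le_iff_le self_mem_Ici ht').2 ht'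
  apply propext
  show h t * Real.exp (σ * h t) < x ↔ t < t0
  rw [← hmono.lt_iff_lt ht' ht0, hht0, lt_div_iff₀ hσ, mul_comm (h t) σ,
    ← hg.lt_iff_lt (mul_nonneg hσ.le hht) hw]
  show _ ↔ σ * h t * Real.exp (σ * h t) < w * Real.exp w
  rw [hwx, mul_assoc, mul_lt_mul_iff_right₀ hσ]
end

section
/- Let α > 0, σ ≥ 0, and let h : [0,∞) → [0,∞) be a differentiable, strictly increasing function with h(0) = 0 and h(x) → ∞ as x → ∞, and let f(x) = h'(x) · h(x)^(α−1) · e^(−h(x)) / Γ(α) for x > 0. Then for every real s with −α < s and σ s < 1, one has E[ h(X)^s e^(σ s h(X)) ] = ∫₀^∞ h(x)^s e^(σ s h(x)) f(x) dx = Γ(α + s) / ( Γ(α) · (1 − σ s)^(α + s) ). -/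
open MeasureTheory Real Set

/-- For `X ~ GE(α, h)`, `σ ≥ 0` and `-α < s` with `σ s < 1`,
`E[h(X)^s exp(σ s h(X))] = Γ(α+s) / (Γ(α) (1 - σ s)^(α+s))`. -/
theorem GE_exp_moment (α σ : ℝ) (hα : 0 < α) (hσ : 0 ≤ σ) (h h' : ℝ → ℝ)
    (hderiv : ∀ x ∈ Ici (0 : ℝ), HasDerivAt h (h' x) x)
    (hmono : StrictMonoOn h (Ici 0))
    (h0 : h 0 = 0)
    (htop : Filter.Tendsto h Filter.atTop Filter.atTop)
    (f : ℝ → ℝ)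
    (hf : ∀ x, 0 < x → f x = h' x * (h x) ^ (α - 1) * Real.exp (-(h x)) / Real.Gamma α) :
    ∀ s : ℝ, -α < s → σ * s < 1 →
      ∫ x in Ioi (0 : ℝ), (h x) ^ s * Real.exp (σ * s * h x) * f x =
        Real.Gamma (α + s) / (Real.Gamma α * (1 - σ * s) ^ (α + s)) := by
  intro s hs hσs
  have hpos : ∀ x ∈ Ioi (0:ℝ), 0 < h x := by
    intro x hx
    have := hmono (mem_Ici.2 le_rfl) (mem_Ici.2 (le_of_lt hx)) hx
    rwa [h0] at this
  have himg : h '' Ioi 0 = Ioi 0 := by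
    apply Subset.antisymm
    · rintro _ ⟨x, hx, rfl⟩
      exact hpos x hx
    · intro y hy
      obtain ⟨b, hb, hb0⟩ :=
        ((htop.eventually_ge_atTop y).and (Filter.eventually_ge_atTop (0:ℝ))).exists
      have hc : ContinuousOn h (Icc 0 b) := fun x hx =>
        (hderiv x hx.1).continuousAt.continuousWithinAt
      have hy' : y ∈ Icc (h 0) (h b) := ⟨by rw [h0]; exact le_of_lt hy, hb⟩
      obtain ⟨x, hx, hxy⟩ := intermediate_value_Icc hb0 hc hy'
      refine ⟨x, lt_of_le_of_ne hx.1 ?_, hxy⟩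
      rintro rfl
      rw [h0] at hxy
      exact (ne_of_gt hy) hxy.symm
  have hΓ : 0 < Real.Gamma α := Real.Gamma_pos_of_pos hα
  have hr : 0 < 1 - σ * s := by linarith
  have ha : 0 < α + s := by linarith
  have key := integral_image_eq_integral_deriv_smul_of_monotoneOn (s := Ioi (0:ℝ))
    measurableSet_Ioi
    (fun x hx => (hderiv x (Ioi_subset_Ici_self hx)).hasDerivWithinAt)
    (hmono.monotoneOn.mono Ioi_subset_Ici_self)
    (fun t : ℝ => t ^ (α + s - 1) * Real.exp (-((1 - σ * s) * t)))
  rw [himg, Real.integral_rpow_mul_exp_neg_mul_Ioi ha hr] at key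
  have hcongr : ∫ x in Ioi (0 : ℝ), (h x) ^ s * Real.exp (σ * s * h x) * f x =
      ∫ x in Ioi (0 : ℝ), (Real.Gamma α)⁻¹ *
        (h' x • ((h x) ^ (α + s - 1) * Real.exp (-((1 - σ * s) * h x)))) := by
    refine setIntegral_congr_fun measurableSet_Ioi (fun x hx => ?_)
    have hx' := hpos x hx
    have e1 : (h x) ^ (α + s - 1) = (h x) ^ s * (h x) ^ (α - 1) := by
      rw [← Real.rpow_add hx']; congr 1; ring
    have e2 : Real.exp (-((1 - σ * s) * h x)) = Real.exp (σ * s * h x) * Real.exp (-(h x)) := by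
      rw [← Real.exp_add]; congr 1; ring
    simp only [hf x hx, e1, e2, smul_eq_mul]
    ring
  rw [hcongr, integral_const_mul, ← key, one_div, Real.inv_rpow hr.le]
  have := Real.rpow_pos_of_pos hr (α + s)
  field_simp
end

section
/- Let λ, β, k, α > 0 with k ≥ 1, and let f(x) = (λ + β k x^(k−1)) · e^(−λx − βx^k) · (λx + βx^k)^(α−1) / Γ(α) for x > 0. Then for every real s with s > −α, one has E[(λX + βX^k)^s] = ∫₀^∞ (λx + βx^k)^s f(x) dx = Γ(α + s)/Γ(α). In particular, for s = 1, λ·E[X] + β·E[X^k] = α. -/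
open MeasureTheory Real Set

lemma GEEW_image (lam β k : ℝ) (hlam : 0 < lam) (hβ : 0 < β) (hk0 : 0 < k) :
    Set.image (fun x : ℝ => lam * x + β * x ^ k) (Ioi 0) = Ioi 0 := by
  ext y
  constructor
  · rintro ⟨x, hx, rfl⟩
    have hx' : (0:ℝ) < x := hx
    have : 0 < lam * x + β * x ^ k := by positivity
    exact this
  · intro hy
    have hy' : (0:ℝ) < y := hy
    have hc : ContinuousOn (fun x : ℝ => lam * x + β * x ^ k) (Icc 0 (y / lam)) := by
      apply Continuous.continuousOn
      exact (continuous_const.mul continuous_id).add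
        (continuous_const.mul (Real.continuous_rpow_const hk0.le))
    have h0 : 0 ≤ y / lam := by positivity
    have hv := intermediate_value_Icc h0 hc
    have hmem : y ∈ Icc (lam * 0 + β * (0:ℝ) ^ k) (lam * (y / lam) + β * (y / lam) ^ k) := by
      constructor
      · rw [Real.zero_rpow hk0.ne']; simpa using hy'.le
      · have : 0 ≤ β * (y / lam) ^ k := by positivity
        have h2 : lam * (y / lam) = y := by field_simp
        linarith
    obtain ⟨x, hx, hxy⟩ := hv hmem
    refine ⟨x, ?_, hxy⟩
    rcases hx.1.eq_or_lt with h | h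
    · exfalso
      subst h
      simp [Real.zero_rpow hk0.ne'] at hxy
      linarith
    · exact h

lemma GEEW_aux (lam β k α : ℝ)
    (hlam : 0 < lam) (hβ : 0 < β) (hk0 : 0 < k)
    (f : ℝ → ℝ)
    (hf : ∀ x, 0 < x →
      f x = (lam + β * k * x ^ (k - 1)) * Real.exp (-(lam * x) - β * x ^ k) *
            (lam * x + β * x ^ k) ^ (α - 1) / Real.Gamma α) (s : ℝ) (hs : -α < s) :
    IntegrableOn (fun x => (lam * x + β * x ^ k) ^ s * f x) (Ioi 0) ∧
      ∫ x in Ioi (0 : ℝ), (lam * x + β * x ^ k) ^ s * f x =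
        Real.Gamma (α + s) / Real.Gamma α := by
  have hd : ∀ x ∈ Ioi (0:ℝ), HasDerivWithinAt (fun x : ℝ => lam * x + β * x ^ k)
      (lam + β * k * x ^ (k - 1)) (Ioi 0) x := by
    intro x hx
    have hx' : (0:ℝ) < x := hx
    have h1 := ((hasDerivAt_id x).const_mul lam).add
      ((Real.hasDerivAt_rpow_const (p := k) (Or.inl hx'.ne')).const_mul β)
    refine HasDerivAt.hasDerivWithinAt ?_
    have he : lam + β * k * x ^ (k - 1) = lam * 1 + β * (k * x ^ (k - 1)) := by ring
    rw [he]
    exact h1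
  have hinj : InjOn (fun x : ℝ => lam * x + β * x ^ k) (Ioi 0) := by
    apply StrictMonoOn.injOn
    intro x hx y hy hxy
    have h1 : x ^ k < y ^ k := Real.rpow_lt_rpow (le_of_lt hx) hxy hk0
    have h2 := mul_lt_mul_of_pos_left h1 hβ
    have h3 := mul_lt_mul_of_pos_left hxy hlam
    show lam * x + β * x ^ k < lam * y + β * y ^ k
    linarith
  have hcong : EqOn (fun x => |lam + β * k * x ^ (k - 1)| •
      (fun y : ℝ => Real.exp (-y) * y ^ (α + s - 1) / Real.Gamma α) (lam * x + β * x ^ k))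
      (fun x => (lam * x + β * x ^ k) ^ s * f x) (Ioi 0) := by
    intro x hx
    have hx' : (0:ℝ) < x := hx
    have hp : 0 < lam + β * k * x ^ (k - 1) := by positivity
    have hg : 0 < lam * x + β * x ^ k := by positivity
    simp only [smul_eq_mul]
    rw [hf x hx', abs_of_pos hp, show α + s - 1 = s + (α - 1) by ring, Real.rpow_add hg,
      neg_add']
    ring
  have hI : IntegrableOn (fun y : ℝ => Real.exp (-y) * y ^ (α + s - 1) / Real.Gamma α)
      (Ioi 0) := (Real.GammaIntegral_convergent (by linarith)).div_const _
  have him := GEEW_image lam β k hlam hβ hk0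
  constructor
  · rw [← him, integrableOn_image_iff_integrableOn_abs_deriv_smul measurableSet_Ioi hd hinj] at hI
    exact hI.congr_fun hcong measurableSet_Ioi
  · rw [← setIntegral_congr_fun measurableSet_Ioi hcong,
      ← integral_image_eq_integral_abs_deriv_smul measurableSet_Ioi hd hinj
        (fun y : ℝ => Real.exp (-y) * y ^ (α + s - 1) / Real.Gamma α), him,
      integral_div, Real.Gamma_eq_integral (by linarith : 0 < α + s)]

/-- For `X ~ GEEW(λ, β, k, α)` and `s > -α`,
`E[(λX + βX^k)^s] = Γ(α+s)/Γ(α)`; in particular `λ E[X] + β E[X^k] = α`. -/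
theorem GEEW_moment (lam β k α : ℝ)
    (hlam : 0 < lam) (hβ : 0 < β) (hk0 : 0 < k) (hk : 1 ≤ k) (hα : 0 < α)
    (f : ℝ → ℝ)
    (hf : ∀ x, 0 < x →
      f x = (lam + β * k * x ^ (k - 1)) * Real.exp (-(lam * x) - β * x ^ k) *
            (lam * x + β * x ^ k) ^ (α - 1) / Real.Gamma α) :
    (∀ s : ℝ, -α < s →
      ∫ x in Ioi (0 : ℝ), (lam * x + β * x ^ k) ^ s * f x =
        Real.Gamma (α + s) / Real.Gamma α) ∧
    (lam * ∫ x in Ioi (0 : ℝ), x * f x) + (β * ∫ x in Ioi (0 : ℝ), x ^ k * f x) = α := by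
  refine ⟨fun s hs => (GEEW_aux lam β k α hlam hβ hk0 f hf s hs).2, ?_⟩
  obtain ⟨hI, hE⟩ := GEEW_aux lam β k α hlam hβ hk0 f hf 1 (by linarith)
  simp only [Real.rpow_one] at hI hE
  have hΓ : 0 < Real.Gamma α := Real.Gamma_pos_of_pos hα
  have hfm : AEStronglyMeasurable f (volume.restrict (Ioi 0)) := by
    have hm : Measurable (fun x : ℝ => (lam + β * k * x ^ (k - 1)) *
        Real.exp (-(lam * x) - β * x ^ k) *
        (lam * x + β * x ^ k) ^ (α - 1) / Real.Gamma α) := by fun_prop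
    refine hm.aestronglyMeasurable.congr ?_
    filter_upwards [ae_restrict_mem measurableSet_Ioi] with x hx
    exact (hf x hx).symm
  have hf0 : ∀ x, 0 < x → 0 ≤ f x := by
    intro x hx
    rw [hf x hx]
    positivity
  have hA : IntegrableOn (fun x => lam * (x * f x)) (Ioi 0) := by
    refine Integrable.mono hI ((measurable_id.aestronglyMeasurable.mul hfm).const_mul lam) ?_
    filter_upwards [ae_restrict_mem measurableSet_Ioi] with x hx
    have hx' : (0:ℝ) < x := hx
    have h0 := hf0 x hx'
    rw [Real.norm_of_nonneg (by positivity), Real.norm_of_nonneg (by positivity)]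
    have : 0 ≤ β * x ^ k * f x := by positivity
    linarith
  have hB : IntegrableOn (fun x => β * (x ^ k * f x)) (Ioi 0) := by
    refine (hI.sub hA).congr ?_
    filter_upwards with x
    simp only [Pi.sub_apply]
    ring
  rw [← integral_const_mul, ← integral_const_mul, ← integral_add hA hB]
  have h1 : (fun x => lam * (x * f x) + β * (x ^ k * f x))
      = fun x => (lam * x + β * x ^ k) * f x := by
    funext x; ring
  rw [h1, hE, Real.Gamma_add_one hα.ne']
  field_simp
end

section
/- Let μ, a, ν, ρ be positive real numbers such that ρ + (ℓ + μ)/ν is not a positive integer for any nonnegative integer ℓ. Then the integral I_μ(a, ν, ρ) = ∫₀^∞ x^(μ−1) (1 + a x^ν)^ρ e^(−x) dx equals the convergent series Σ_{n≥0} ( (−1)^n (−ρ)_n / n! ) · { a^n · γ(μ + νn, a^(−1/ν)) + a^(ρ−n) · Γ(μ + ν(ρ − n), a^(−1/ν)) }, where (−ρ)_n = (−ρ)(−ρ+1)⋯(−ρ+n−1) is the Pochhammer symbol. -/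
open MeasureTheory Real Set

/-- Pochhammer symbol `(c)_n = c (c+1) ⋯ (c+n-1)`. -/
noncomputable def poch (c : ℝ) (n : ℕ) : ℝ := ∏ i ∈ Finset.range n, (c + i)

/-- Lower incomplete Gamma function `γ(s, z) = ∫₀^z t^(s-1) e^(-t) dt`. -/
noncomputable def lowerIncGamma (s z : ℝ) : ℝ := ∫ t in Ioc (0 : ℝ) z, t ^ (s - 1) * Real.exp (-t)

/-- Upper incomplete Gamma function `Γ(s, z) = ∫_z^∞ t^(s-1) e^(-t) dt`. -/
noncomputable def upperIncGamma (s z : ℝ) : ℝ := ∫ t in Ioi z, t ^ (s - 1) * Real.exp (-t)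

/-- Signed binomial coefficient. -/
noncomputable def binC (ρ : ℝ) (n : ℕ) : ℝ := (-1 : ℝ) ^ n * poch (-ρ) n / (n.factorial : ℝ)

lemma binC_succ (ρ : ℝ) (n : ℕ) : binC ρ (n + 1) * (n + 1) = binC ρ n * (ρ - n) := by
  unfold binC poch
  rw [Finset.prod_range_succ, Nat.factorial_succ]
  have : (n.factorial : ℝ) ≠ 0 := by positivity
  have h2 : (n : ℝ) + 1 ≠ 0 := by positivity
  push_cast
  field_simp
  ring

lemma binC_eq_choose (ρ : ℝ) (n : ℕ) : Ring.choose ρ n = binC ρ n := by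
  have key : ∀ n : ℕ, (descPochhammer ℤ n).smeval ρ = (-1 : ℝ) ^ n * poch (-ρ) n := by
    intro n
    induction n with
    | zero => simp [poch]
    | succ n ih =>
      rw [descPochhammer_succ_right, Polynomial.smeval_mul, ih]
      simp only [poch, Finset.prod_range_succ]
      simp [Polynomial.smeval_natCast]
      ring
  rw [Ring.choose_eq_smul, key, binC]
  simp
  field_simp

lemma binC_summable (ρ : ℝ) (hρ : 0 < ρ) : Summable (fun n => |binC ρ n|) := by
  obtain ⟨N, hN⟩ := exists_nat_ge ρ
  rw [← summable_nat_add_iff N]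
  have step : ∀ k : ℕ, ρ * |binC ρ (k + N)| =
      ((k + N : ℕ) : ℝ) * |binC ρ (k + N)| - ((k + 1 + N : ℕ) : ℝ) * |binC ρ (k + 1 + N)| := by
    intro k
    have h := congrArg abs (binC_succ ρ (k + N))
    have hle : ρ ≤ ((k + N : ℕ) : ℝ) := by push_cast; have : (0 : ℝ) ≤ k := by positivity
                                           linarith
    rw [abs_mul, abs_mul, abs_of_nonpos (by linarith : ρ - ((k + N : ℕ) : ℝ) ≤ 0),
      abs_of_nonneg (by positivity : (0 : ℝ) ≤ ((k + N : ℕ) : ℝ) + 1)] at h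
    rw [show k + 1 + N = k + N + 1 by ring]
    push_cast at h ⊢
    linarith
  apply summable_of_sum_range_le (c := ((N : ℕ) : ℝ) * |binC ρ N| / ρ) (fun n => abs_nonneg _)
  intro n
  rw [le_div_iff₀ hρ, mul_comm, Finset.mul_sum, Finset.sum_congr rfl (fun k _ => step k),
    Finset.sum_range_sub' (fun k : ℕ => ((k + N : ℕ) : ℝ) * |binC ρ (k + N)|)]
  have : 0 ≤ ((n + N : ℕ) : ℝ) * |binC ρ (n + N)| := by positivity
  simp only [Nat.zero_add]
  linarith

lemma binC_hasSum (ρ y : ℝ) (hy : 0 ≤ y) (hy1 : y < 1) :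
    HasSum (fun n => binC ρ n * y ^ n) ((1 + y) ^ ρ) := by
  have h := (Real.one_add_rpow_hasFPowerSeriesOnBall_zero (a := ρ)).hasSum (y := y) (by
    rw [← ENNReal.ofReal_one, Metric.eball_ofReal]
    simpa [abs_of_nonneg hy] using hy1)
  simp only [binomialSeries_apply, List.ofFn_const, List.prod_replicate, binC_eq_choose,
    smul_eq_mul, zero_add] at h
  exact h

/-- Series expansion of `I_μ(a, ν, ρ) = ∫₀^∞ x^(μ-1)(1+ax^ν)^ρ e^(-x) dx`
in terms of lower and upper incomplete Gamma functions. -/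
theorem I_integral_series (μ a ν ρ : ℝ) (hμ : 0 < μ) (ha : 0 < a) (hν : 0 < ν) (hρ : 0 < ρ)
    (hnotnat : ∀ (ℓ : ℕ) (m : ℕ), 0 < m → ρ + ((ℓ : ℝ) + μ) / ν ≠ (m : ℝ)) :
    HasSum (fun n : ℕ =>
      ((-1 : ℝ) ^ n * poch (-ρ) n / (n.factorial : ℝ)) *
        (a ^ n * lowerIncGamma (μ + ν * n) (a ^ (-1 / ν)) +
         a ^ (ρ - n) * upperIncGamma (μ + ν * (ρ - n)) (a ^ (-1 / ν))))
      (∫ x in Ioi (0 : ℝ), x ^ (μ - 1) * (1 + a * x ^ ν) ^ ρ * Real.exp (-x)) := by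
  set z : ℝ := a ^ (-1 / ν) with hz
  have hz0 : 0 < z := by positivity
  have haz : a * z ^ ν = 1 := by
    rw [hz, ← Real.rpow_mul ha.le, div_mul_cancel₀ _ hν.ne', Real.rpow_neg_one,
      mul_inv_cancel₀ ha.ne']
  have hle : ∀ x : ℝ, 0 < x → x ≤ z → a * x ^ ν ≤ 1 := by
    intro x hx hxz
    rw [← haz]; gcongr
  have hlt : ∀ x : ℝ, 0 < x → x < z → a * x ^ ν < 1 := by
    intro x hx hxz
    rw [← haz]; gcongr
  have hgt : ∀ x : ℝ, z < x → 1 < a * x ^ ν := by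
    intro x hxz
    rw [← haz]; gcongr
  -- the pieces
  let K : ℕ → ℝ → ℝ := fun n x => x ^ (μ - 1) * Real.exp (-x) *
    (if x ≤ z then (a * x ^ ν) ^ n else (a * x ^ ν) ^ (ρ - n))
  let g : ℝ → ℝ := fun x => x ^ (μ - 1) * Real.exp (-x) * (1 + (a * x ^ ν) ^ ρ)
  have hKmeas : ∀ n, Measurable (K n) := by
    intro n
    refine Measurable.mul (by fun_prop) (Measurable.ite measurableSet_Iic ?_ ?_) <;> fun_prop
  have hKg : ∀ n x, 0 < x → ‖K n x‖ ≤ g x := by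
    intro n x hx
    have hy : 0 < a * x ^ ν := by positivity
    simp only [K, g]
    rw [norm_mul, Real.norm_of_nonneg (by positivity : 0 ≤ x ^ (μ - 1) * Real.exp (-x))]
    gcongr
    split_ifs with h
    · rw [Real.norm_of_nonneg (by positivity)]
      have h1 := pow_le_one₀ (n := n) hy.le (hle x hx h)
      have h2 : 0 ≤ (a * x ^ ν) ^ ρ := by positivity
      linarith
    · rw [Real.norm_of_nonneg (by positivity)]
      have h1 : (a * x ^ ν) ^ (ρ - n) ≤ (a * x ^ ν) ^ ρ :=
        Real.rpow_le_rpow_of_exponent_le (hgt x (not_le.mp h)).le (by simp)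
      linarith
  have hgint : IntegrableOn g (Ioi 0) := by
    have h1 := Real.GammaIntegral_convergent hμ
    have h2 := (Real.GammaIntegral_convergent (s := μ + ν * ρ) (by positivity)).const_mul (a ^ ρ)
    refine (IntegrableOn.congr_fun (h1.add h2) ?_ measurableSet_Ioi)
    intro x hx
    have hx : 0 < x := hx
    simp only [g, Pi.add_apply]
    rw [Real.mul_rpow ha.le (by positivity), ← Real.rpow_mul hx.le,
      show μ + ν * ρ - 1 = (μ - 1) + ν * ρ by ring, Real.rpow_add hx]
    ring
  have hKint : ∀ n, IntegrableOn (K n) (Ioi 0) := by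
    intro n
    refine Integrable.mono' hgint (hKmeas n).aestronglyMeasurable ?_
    filter_upwards [ae_restrict_mem measurableSet_Ioi] with x hx using hKg n x hx
  have hsplit : ∀ n : ℕ, ∫ x in Ioi (0 : ℝ), binC ρ n * K n x =
      ((-1 : ℝ) ^ n * poch (-ρ) n / (n.factorial : ℝ)) *
        (a ^ n * lowerIncGamma (μ + ν * n) z +
         a ^ (ρ - n) * upperIncGamma (μ + ν * (ρ - n)) z) := by
    intro n
    rw [integral_const_mul, ← Ioc_union_Ioi_eq_Ioi hz0.le,
      setIntegral_union (Ioc_disjoint_Ioi le_rfl) measurableSet_Ioi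
        ((hKint n).mono_set Ioc_subset_Ioi_self) ((hKint n).mono_set (Ioi_subset_Ioi hz0.le)),
      lowerIncGamma, upperIncGamma, ← integral_const_mul, ← integral_const_mul, binC]
    congr 2
    · refine setIntegral_congr_fun measurableSet_Ioc ?_
      intro x hx
      have hx0 : 0 < x := hx.1
      simp only [K, if_pos hx.2]
      rw [mul_pow, ← Real.rpow_mul_natCast hx0.le,
        show μ + ν * n - 1 = (μ - 1) + ν * n by ring, Real.rpow_add hx0]
      ring
    · refine setIntegral_congr_fun measurableSet_Ioi ?_
      intro x hx
      have hxz : z < x := hx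
      have hx0 : 0 < x := hz0.trans hxz
      simp only [K, if_neg (not_le.mpr hxz)]
      rw [Real.mul_rpow ha.le (by positivity), ← Real.rpow_mul hx0.le,
        show μ + ν * (ρ - n) - 1 = (μ - 1) + ν * (ρ - n) by ring, Real.rpow_add hx0]
      ring
  simp_rw [← hsplit]
  have hs := binC_summable ρ hρ
  refine hasSum_integral_of_dominated_convergence (fun n x => |binC ρ n| * g x) ?_ ?_ ?_ ?_ ?_
  · intro n
    exact ((hKmeas n).const_mul _).aestronglyMeasurable
  · intro n
    filter_upwards [ae_restrict_mem measurableSet_Ioi] with x hx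
    rw [norm_mul, Real.norm_eq_abs]
    exact mul_le_mul_of_nonneg_left (hKg n x hx) (abs_nonneg _)
  · exact Filter.Eventually.of_forall fun x => hs.mul_right _
  · simp_rw [tsum_mul_right]
    exact hgint.const_mul _
  · have hne : ∀ᵐ x ∂(volume.restrict (Ioi (0 : ℝ))), x ≠ z :=
      ae_restrict_of_ae (Measure.ae_ne volume z)
    filter_upwards [ae_restrict_mem measurableSet_Ioi, hne] with x hx hxz
    have hx : 0 < x := hx
    have hy : 0 < a * x ^ ν := by positivity
    rcases lt_or_gt_of_ne hxz with h | h
    · have := (binC_hasSum ρ _ hy.le (hlt x hx h)).mul_left (x ^ (μ - 1) * Real.exp (-x))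
      convert! this using 1
      · funext n
        simp only [K, if_pos h.le]
        ring
      · ring
    · have h1 := hgt x h
      have := (binC_hasSum ρ (a * x ^ ν)⁻¹ (by positivity) (inv_lt_one_of_one_lt₀ h1)).mul_left
        (x ^ (μ - 1) * Real.exp (-x) * (a * x ^ ν) ^ ρ)
      convert! this using 1
      · funext n
        simp only [K, if_neg (not_le.mpr h)]
        rw [Real.rpow_sub hy, Real.rpow_natCast, inv_pow]
        ring
      · have : 1 + a * x ^ ν = (a * x ^ ν) * (1 + (a * x ^ ν)⁻¹) := by
          field_simp
          ring
        rw [this, Real.mul_rpow hy.le (by positivity)]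
        ring
end
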